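/- arXiv:1304.1839 — 2 statements merged into one kernel-verified Lean document; each statement's English description precedes it below -/
import Mathlib

section
/- Let x, y ∈ ℂⁿ be linearly independent and T = xx* − yy*. For x', y' ∈ ℂⁿ defined by x' = b₁₁x + b₁₂y and y' = b₂₁x + b₂₂y for a 2×2 complex matrix B = (b_{ij}), one has x'(x')* − y'(y')* = xx* − yy* if and only if B* D B = D, where D = [[1,0],[0,−1]]. Moreover every pair (x',y') with x'(x')* − y'(y')* = xx* − yy* arises this way from some B with B* D B = D. -/
open scoped BigOperators ComplexConjugate
open Matrix

noncomputable section

/-- Inner product on `ℂⁿ`, linear in the first argument: `⟨x,y⟩ = ∑ⱼ xⱼ conj(yⱼ)`. -/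
def cip {n : ℕ} (x y : Fin n → ℂ) : ℂ := ∑ j, x j * (starRingEnd ℂ) (y j)

/-- Squared Euclidean norm on `ℂⁿ`. -/
def cnSq {n : ℕ} (x : Fin n → ℂ) : ℝ := ∑ j, Complex.normSq (x j)

/-- The phaseless measurement map `α(x)ₖ = |⟨x,fₖ⟩|²`. -/
def alphaMap {n m : ℕ} (f : Fin m → Fin n → ℂ) (x : Fin n → ℂ) : Fin m → ℝ :=
  fun k => Complex.normSq (cip x (f k))

/-- `α` is injective up to a global phase. -/
def InjUpToPhase {n m : ℕ} (f : Fin m → Fin n → ℂ) : Prop :=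
  ∀ x y : Fin n → ℂ, alphaMap f x = alphaMap f y → ∃ c : ℂ, ‖c‖ = 1 ∧ y = c • x

/-- Rank-one operator `u v*`, with entries `uᵢ conj(vⱼ)`. -/
def outer {n : ℕ} (u v : Fin n → ℂ) : Matrix (Fin n) (Fin n) ℂ :=
  Matrix.vecMulVec u (star v)

/-- Symmetric outer product `[u,v] = ½(uv* + vu*)`. -/
def symOuter {n : ℕ} (u v : Fin n → ℂ) : Matrix (Fin n) (Fin n) ℂ :=
  (1/2 : ℂ) • (outer u v + outer v u)

theorem functional_apply {n : ℕ} {u v x y : Fin n → ℂ}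
    (h : outer u u - outer v v = outer x x - outer y y) (f : (Fin n → ℂ) →ₗ[ℂ] ℂ) :
    conj (f u) • u - conj (f v) • v = conj (f x) • x - conj (f y) • y := by
  funext j
  have h1 : conj (u j) • u - conj (v j) • v = conj (x j) • x - conj (y j) • y := by
    funext i
    have := congrFun (congrFun h i) j
    simp only [outer, Matrix.sub_apply, Matrix.vecMulVec_apply, Pi.star_apply,
      RCLike.star_def] at this
    simp only [Pi.sub_apply, Pi.smul_apply, smul_eq_mul]
    linear_combination this
  have h2 := congrArg (fun z => conj (f z)) h1
  simp only [map_sub, map_smul, smul_eq_mul, map_mul, Complex.conj_conj] at h2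
  simp only [Pi.sub_apply, Pi.smul_apply, smul_eq_mul]
  linear_combination h2

theorem exists_dual {n : ℕ} {x y : Fin n → ℂ} (hli : LinearIndependent ℂ ![x, y]) :
    ∃ f g : (Fin n → ℂ) →ₗ[ℂ] ℂ, f x = 1 ∧ f y = 0 ∧ g x = 0 ∧ g y = 1 := by
  obtain ⟨L, hL⟩ := LinearMap.exists_leftInverse_of_injective
    (Fintype.linearCombination ℂ ![x, y]) (LinearMap.ker_eq_bot.2
      (linearIndependent_iff_injective_fintypeLinearCombination.1 hli))
  have hx : L x = ![1, 0] := by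
    have := LinearMap.congr_fun hL ![1, 0]
    simpa [Fintype.linearCombination_apply] using this
  have hy : L y = ![0, 1] := by
    have := LinearMap.congr_fun hL ![0, 1]
    simpa [Fintype.linearCombination_apply] using this
  refine ⟨LinearMap.proj 0 ∘ₗ L, LinearMap.proj 1 ∘ₗ L, ?_, ?_, ?_, ?_⟩ <;> simp [hx, hy]

theorem first_part {n : ℕ} {x y : Fin n → ℂ} (hli : LinearIndependent ℂ ![x, y])
    (B : Matrix (Fin 2) (Fin 2) ℂ) :
    outer (B 0 0 • x + B 0 1 • y) (B 0 0 • x + B 0 1 • y)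
            - outer (B 1 0 • x + B 1 1 • y) (B 1 0 • x + B 1 1 • y)
          = outer x x - outer y y
          ↔ Bᴴ * !![(1 : ℂ), 0; 0, -1] * B = !![(1 : ℂ), 0; 0, -1] := by
  have hB : Bᴴ * !![(1 : ℂ), 0; 0, -1] * B = !![(1 : ℂ), 0; 0, -1] ↔
      ((conj (B 0 0) * B 0 0 - conj (B 1 0) * B 1 0 = 1 ∧
       conj (B 0 0) * B 0 1 - conj (B 1 0) * B 1 1 = 0) ∧
      (conj (B 0 1) * B 0 0 - conj (B 1 1) * B 1 0 = 0 ∧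
       conj (B 0 1) * B 0 1 - conj (B 1 1) * B 1 1 = -1)) := by
    rw [← Matrix.ext_iff]
    simp [Fin.forall_fin_two, Matrix.mul_apply, Fin.sum_univ_two, sub_eq_add_neg]
  rw [hB]
  constructor
  · intro h
    obtain ⟨f, g, fx, fy, gx, gy⟩ := exists_dual hli
    have hf := functional_apply h f
    have hg := functional_apply h g
    simp only [map_add, map_smul, fx, fy, gx, gy, smul_eq_mul, mul_one, mul_zero, add_zero,
      zero_add, map_one, map_zero] at hf hg
    have hp := LinearIndependent.pair_iff.1 hli
    have h1 := hp (conj (B 0 0) * B 0 0 - conj (B 1 0) * B 1 0 - 1)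
      (conj (B 0 0) * B 0 1 - conj (B 1 0) * B 1 1) (by
        rw [← sub_eq_zero] at hf; rw [← hf]; module)
    have h2 := hp (conj (B 0 1) * B 0 0 - conj (B 1 1) * B 1 0)
      (conj (B 0 1) * B 0 1 - conj (B 1 1) * B 1 1 + 1) (by
        rw [← sub_eq_zero] at hg; rw [← hg]; module)
    exact ⟨⟨sub_eq_zero.1 h1.1, h1.2⟩, h2.1, eq_neg_of_add_eq_zero_left h2.2⟩
  · rintro ⟨⟨h1, h2⟩, h3, h4⟩
    ext i j
    simp only [outer, Matrix.sub_apply, Matrix.vecMulVec_apply, Pi.star_apply,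
      RCLike.star_def, Pi.add_apply, Pi.smul_apply, smul_eq_mul, map_add, map_mul]
    linear_combination x i * conj (x j) * h1 + y i * conj (x j) * h2
      + x i * conj (y j) * h3 + y i * conj (y j) * h4

/-- Let `x, y` be linearly independent and `T = xx* − yy*`. For
`x' = b₁₁x + b₁₂y`, `y' = b₂₁x + b₂₂y` one has `x'(x')* − y'(y')* = xx* − yy*` iff
`B* D B = D` with `D = [[1,0],[0,−1]]`; and every such pair `(x',y')` arises this way. -/
theorem stmt11 (n : ℕ) (x y : Fin n → ℂ)
    (hli : LinearIndependent ℂ ![x, y]) :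
    (∀ B : Matrix (Fin 2) (Fin 2) ℂ,
        outer (B 0 0 • x + B 0 1 • y) (B 0 0 • x + B 0 1 • y)
            - outer (B 1 0 • x + B 1 1 • y) (B 1 0 • x + B 1 1 • y)
          = outer x x - outer y y
          ↔ Bᴴ * !![(1 : ℂ), 0; 0, -1] * B = !![(1 : ℂ), 0; 0, -1])
    ∧ (∀ x' y' : Fin n → ℂ,
        outer x' x' - outer y' y' = outer x x - outer y y →
        ∃ B : Matrix (Fin 2) (Fin 2) ℂ,
          Bᴴ * !![(1 : ℂ), 0; 0, -1] * B = !![(1 : ℂ), 0; 0, -1] ∧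
          x' = B 0 0 • x + B 0 1 • y ∧ y' = B 1 0 • x + B 1 1 • y) := by
  refine ⟨first_part hli, ?_⟩
  intro x' y' h
  obtain ⟨f, g, fx, fy, gx, gy⟩ := exists_dual hli
  have hf := functional_apply h f
  have hg := functional_apply h g
  simp only [fx, fy, gx, gy, map_one, map_zero, one_smul, zero_smul, sub_zero, zero_sub] at hf hg
  generalize conj (f x') = a at hf
  generalize conj (f y') = b at hf
  generalize conj (g x') = c at hg
  generalize conj (g y') = d at hg
  have e1 : (a * d - b * c) • x' = d • x + b • y := by
    have : y = -(c • x' - d • y') := by rw [hg, neg_neg]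
    rw [← hf, this]; module
  have e2 : (a * d - b * c) • y' = c • x + a • y := by
    have : y = -(c • x' - d • y') := by rw [hg, neg_neg]
    rw [← hf, this]; module
  have hp := LinearIndependent.pair_iff.1 hli
  have hdet : a * d - b * c ≠ 0 := by
    intro h0
    rw [h0, zero_smul] at e1 e2
    have k1 := hp _ _ e1.symm
    have k2 := hp _ _ e2.symm
    rw [k1.2, k2.2] at hf
    have := hp 1 0 (by rw [one_smul, zero_smul, add_zero, ← hf]; simp)
    exact one_ne_zero this.1
  set D := a * d - b * c
  have hx : x' = (D⁻¹ * d) • x + (D⁻¹ * b) • y := by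
    rw [mul_smul, mul_smul, ← smul_add, ← e1, inv_smul_smul₀ hdet]
  have hy : y' = (D⁻¹ * c) • x + (D⁻¹ * a) • y := by
    rw [mul_smul, mul_smul, ← smul_add, ← e2, inv_smul_smul₀ hdet]
  refine ⟨!![D⁻¹ * d, D⁻¹ * b; D⁻¹ * c, D⁻¹ * a], (first_part hli _).1 ?_, ?_, ?_⟩
  · simpa [← hx, ← hy] using h
  · simpa using hx
  · simpa using hy
end
end

section
/- The following are equivalent: (i) for every x ∈ ℂⁿ, the only Hermitian X with at most one positive and at most one negative eigenvalue satisfying A(X) = A(xx*) is X = xx* (Assumption A); (ii) ker A ∩ S^{2,1} = {0}, i.e. the only Hermitian matrix Z with at most two positive and at most one negative eigenvalue satisfying A(Z) = 0 is Z = 0; (iii) there exists a constant A₃ > 0 such that A₃ · ‖X − Y‖₁² ≤ ‖A(X) − A(Y)‖² for all X ∈ S^{1,1} and Y ∈ S^{1,0}, where the norm on ℝ^m is Euclidean. -/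
open scoped BigOperators ComplexConjugate
open Matrix

noncomputable section

/-- Number of strictly positive eigenvalues (with multiplicity) of a Hermitian matrix. -/
def posCount {n : ℕ} {𝕜 : Type*} [RCLike 𝕜] {X : Matrix (Fin n) (Fin n) 𝕜}
    (hX : X.IsHermitian) : ℕ :=
  Nat.card {i // 0 < hX.eigenvalues i}

/-- Number of strictly negative eigenvalues (with multiplicity) of a Hermitian matrix. -/
def negCount {n : ℕ} {𝕜 : Type*} [RCLike 𝕜] {X : Matrix (Fin n) (Fin n) 𝕜}
    (hX : X.IsHermitian) : ℕ :=
  Nat.card {i // hX.eigenvalues i < 0}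

/-- Nuclear norm of a Hermitian matrix: sum of absolute values of eigenvalues. -/
def nucNorm {n : ℕ} {𝕜 : Type*} [RCLike 𝕜] {X : Matrix (Fin n) (Fin n) 𝕜}
    (hX : X.IsHermitian) : ℝ :=
  ∑ i, |hX.eigenvalues i|

/-- The linear map `A` on Hermitian matrices, `A(T)ₖ = ⟨Tfₖ,fₖ⟩ = tr(T Fₖ)`
(a real number for Hermitian `T`). -/
def AcMap {n m : ℕ} (f : Fin m → Fin n → ℂ) (X : Matrix (Fin n) (Fin n) ℂ) : Fin m → ℝ :=
  fun k => (cip (X.mulVec (f k)) (f k)).re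

lemma cip_conj {n : ℕ} (x y : Fin n → ℂ) : (starRingEnd ℂ) (cip x y) = cip y x := by
  simp [cip, mul_comm]

lemma cip_self {n : ℕ} (x : Fin n → ℂ) : cip x x = (cnSq x : ℂ) := by
  simp [cip, cnSq, Complex.mul_conj]

lemma cnSq_eq_zero {n : ℕ} {x : Fin n → ℂ} (h : cnSq x = 0) : x = 0 := by
  unfold cnSq at h
  rw [Finset.sum_eq_zero_iff_of_nonneg (fun i _ => Complex.normSq_nonneg _)] at h
  funext i
  simpa using h i (Finset.mem_univ i)

lemma cnSq_nonneg {n : ℕ} (x : Fin n → ℂ) : 0 ≤ cnSq x :=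
  Finset.sum_nonneg (fun i _ => Complex.normSq_nonneg _)

/-- The quadratic form. -/
def qf {n : ℕ} (M : Matrix (Fin n) (Fin n) ℂ) (v : Fin n → ℂ) : ℝ := (cip (M.mulVec v) v).re

lemma cip_add_left {n : ℕ} (x y z : Fin n → ℂ) : cip (x + y) z = cip x z + cip y z := by
  simp [cip, add_mul, Finset.sum_add_distrib]

lemma cip_smul_left {n : ℕ} (c : ℂ) (x z : Fin n → ℂ) : cip (c • x) z = c * cip x z := by
  simp [cip, mul_assoc, Finset.mul_sum]

lemma cip_smul_right {n : ℕ} (c : ℂ) (x z : Fin n → ℂ) :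
    cip x (c • z) = (starRingEnd ℂ) c * cip x z := by
  rw [← cip_conj, cip_smul_left, map_mul, cip_conj]

/-- `qf` as a real linear map in the matrix. -/
def qfL {n : ℕ} (v : Fin n → ℂ) : Matrix (Fin n) (Fin n) ℂ →ₗ[ℝ] ℝ where
  toFun M := qf M v
  map_add' M N := by simp [qf, Matrix.add_mulVec, cip_add_left]
  map_smul' c M := by
    have : (c • M) = (c : ℂ) • M := by ext; simp
    rw [this, qf, Matrix.smul_mulVec, cip_smul_left, Complex.re_ofReal_mul]
    rfl

lemma outer_mulVec {n : ℕ} (x v : Fin n → ℂ) : (outer x x).mulVec v = cip v x • x := by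
  funext i
  simp [outer, Matrix.mulVec, Matrix.vecMulVec, dotProduct, cip, Finset.sum_mul]
  exact Finset.sum_congr rfl fun j _ => by ring

lemma qfL_outer {n : ℕ} (x v : Fin n → ℂ) : qfL v (outer x x) = Complex.normSq (cip v x) := by
  change qf _ _ = _
  rw [qf, outer_mulVec, cip_smul_left, ← cip_conj v x, Complex.mul_conj]
  simp

lemma outer_smul {n : ℕ} (c : ℝ) (x : Fin n → ℂ) :
    outer ((c : ℂ) • x) ((c : ℂ) • x) = (c ^ 2) • outer x x := by
  ext i j
  simp [outer, Matrix.vecMulVec]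
  ring

lemma AcMap_eq {n m : ℕ} (f : Fin m → Fin n → ℂ) (X : Matrix (Fin n) (Fin n) ℂ) (k : Fin m) :
    AcMap f X k = qfL (f k) X := rfl

lemma AcMap_sub {n m : ℕ} (f : Fin m → Fin n → ℂ) (X Y : Matrix (Fin n) (Fin n) ℂ) :
    AcMap f (X - Y) = AcMap f X - AcMap f Y := by
  funext k; simp [AcMap_eq]

lemma AcMap_neg {n m : ℕ} (f : Fin m → Fin n → ℂ) (X : Matrix (Fin n) (Fin n) ℂ) :
    AcMap f (-X) = - AcMap f X := by
  funext k; simp [AcMap_eq]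

/-- Signed sum of rank-one matrices. -/
def sgnSum {n : ℕ} {p q : ℕ} (w : Fin p ⊕ Fin q → Fin n → ℂ) : Matrix (Fin n) (Fin n) ℂ :=
  ∑ j, (Sum.elim (fun _ => 1) (fun _ => -1) j : ℝ) • outer (w j) (w j)

lemma spec {n : ℕ} {M : Matrix (Fin n) (Fin n) ℂ} (hM : M.IsHermitian) :
    ∃ u : Fin n → Fin n → ℂ, (∀ i j, cip (u i) (u j) = if i = j then 1 else 0) ∧
      M = ∑ i, hM.eigenvalues i • outer (u i) (u i) ∧
      ∀ v, (∀ i, cip v (u i) = 0) → v = 0 := by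
  have key : ∀ (x y : EuclideanSpace ℂ (Fin n)), cip x y = inner ℂ y x := by
    intro x y
    simp [cip, PiLp.inner_apply]
  refine ⟨fun i => hM.eigenvectorBasis i, ?_, ?_, ?_⟩
  · intro i j
    rw [key, orthonormal_iff_ite.mp hM.eigenvectorBasis.orthonormal]
    simp [eq_comm]
  · conv_lhs => rw [hM.spectral_theorem]
    ext i j
    rw [Unitary.conjStarAlgAut_apply, Matrix.mul_apply, Matrix.sum_apply]
    refine Finset.sum_congr rfl fun k _ => ?_
    rw [Matrix.mul_diagonal]
    simp [outer, Matrix.vecMulVec, Matrix.star_apply]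
    ring
  · intro v hv
    have : WithLp.toLp 2 v = 0 := by
      apply hM.eigenvectorBasis.repr.injective
      ext i
      rw [OrthonormalBasis.repr_apply_apply]
      have := hv i
      rw [← (show ((WithLp.toLp 2 v : EuclideanSpace ℂ (Fin n)) : Fin n → ℂ) = v from rfl), key]
        at this
      simpa using this
    simpa using this

lemma inertia_abs {n : ℕ} {J : Type} [Fintype J] (u : Fin n → Fin n → ℂ) (l : Fin n → ℝ)
    (hu : ∀ v, (∀ i, cip v (u i) = 0) → v = 0) (w : J → Fin n → ℂ) (e : J → ℝ)
    (h : ∀ v, ∑ i, l i * Complex.normSq (cip v (u i)) = ∑ j, e j * Complex.normSq (cip v (w j))) :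
    Nat.card {i // 0 < l i} ≤ Nat.card {j // 0 < e j} := by
  classical
  by_contra hlt
  push Not at hlt
  let T : (Fin n → ℂ) →ₗ[ℂ] (({j // 0 < e j} → ℂ) × ({i // ¬ 0 < l i} → ℂ)) :=
    { toFun := fun v => (fun j => cip v (w j), fun i => cip v (u i))
      map_add' := fun x y => by ext <;> simp [cip_add_left]
      map_smul' := fun c x => by ext <;> simp [cip_smul_left] }
  have hk : LinearMap.ker T ≠ ⊥ := by
    apply LinearMap.ker_ne_bot_of_finrank_lt
    rw [Module.finrank_prod, Module.finrank_fintype_fun_eq_card,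
      Module.finrank_fintype_fun_eq_card, Module.finrank_fintype_fun_eq_card,
      Fintype.card_subtype_compl, Fintype.card_fin]
    rw [Nat.card_eq_fintype_card, Nat.card_eq_fintype_card] at hlt
    have := Fintype.card_subtype_le (fun i => 0 < l i)
    rw [Fintype.card_fin] at this
    omega
  obtain ⟨v, hv, hv0⟩ := (Submodule.ne_bot_iff _).mp hk
  rw [LinearMap.mem_ker] at hv
  have h1 : ∀ j, 0 < e j → cip v (w j) = 0 := fun j hj =>
    congrFun (congrArg Prod.fst hv) ⟨j, hj⟩
  have h2 : ∀ i, ¬ 0 < l i → cip v (u i) = 0 := fun i hi =>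
    congrFun (congrArg Prod.snd hv) ⟨i, hi⟩
  have h3 : ∑ j, e j * Complex.normSq (cip v (w j)) ≤ 0 := by
    refine Finset.sum_nonpos fun j _ => ?_
    by_cases hj : 0 < e j
    · simp [h1 j hj]
    · exact mul_nonpos_of_nonpos_of_nonneg (not_lt.mp hj) (Complex.normSq_nonneg _)
  have h4 : ∀ i ∈ Finset.univ, 0 ≤ l i * Complex.normSq (cip v (u i)) := by
    intro i _
    by_cases hi : 0 < l i
    · exact mul_nonneg hi.le (Complex.normSq_nonneg _)
    · simp [h2 i hi]
  rw [← h v] at h3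
  have h5 := (Finset.sum_eq_zero_iff_of_nonneg h4).mp (le_antisymm h3 (Finset.sum_nonneg h4))
  apply hv0
  apply hu
  intro i
  by_cases hi : 0 < l i
  · have := h5 i (Finset.mem_univ i)
    simpa [hi.ne'] using this
  · exact h2 i hi

lemma inertia {n p q : ℕ} {M : Matrix (Fin n) (Fin n) ℂ} (hM : M.IsHermitian)
    (w : Fin p ⊕ Fin q → Fin n → ℂ) (h : M = sgnSum w) : posCount hM ≤ p ∧ negCount hM ≤ q := by
  classical
  obtain ⟨u, -, hMu, hu⟩ := spec hM
  have hq : ∀ v, ∑ i, hM.eigenvalues i * Complex.normSq (cip v (u i)) =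
      ∑ j, (Sum.elim (fun _ => 1) (fun _ => -1) j : ℝ) * Complex.normSq (cip v (w j)) := by
    intro v
    have := congrArg (qfL v) (hMu.symm.trans h)
    simpa only [sgnSum, map_sum, map_smul, qfL_outer, smul_eq_mul] using this
  constructor
  · refine (inertia_abs u _ hu w _ hq).trans ?_
    rw [Nat.card_eq_fintype_card, Fintype.card_subtype, Finset.card_filter, Fintype.sum_sum_type]
    simp
  · have := inertia_abs u (fun i => - hM.eigenvalues i) hu w
      (fun j => - (Sum.elim (fun _ => 1) (fun _ => -1) j : ℝ)) (by
        intro v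
        simp only [neg_mul, Finset.sum_neg_distrib, hq v])
    have h2 : Nat.card {i // 0 < - hM.eigenvalues i} = negCount hM := by
      simp [negCount]
    rw [h2] at this
    refine this.trans ?_
    rw [Nat.card_eq_fintype_card, Fintype.card_subtype, Finset.card_filter, Fintype.sum_sum_type]
    simp

lemma decomp {n p q : ℕ} {M : Matrix (Fin n) (Fin n) ℂ} (hM : M.IsHermitian)
    (hp : posCount hM ≤ p) (hq : negCount hM ≤ q) :
    ∃ w : Fin p ⊕ Fin q → Fin n → ℂ, M = sgnSum w ∧ (∀ j k, j ≠ k → cip (w j) (w k) = 0) ∧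
      nucNorm hM = ∑ j, cnSq (w j) := by
  classical
  obtain ⟨u, hou, hMu, hu⟩ := spec hM
  set l := hM.eigenvalues with hl
  unfold posCount at hp
  unfold negCount at hq
  rw [Nat.card_eq_fintype_card] at hp hq
  obtain ⟨gp⟩ : Nonempty ({i // 0 < l i} ↪ Fin p) :=
    Function.Embedding.nonempty_of_card_le (by simpa using hp)
  obtain ⟨gn⟩ : Nonempty ({i // l i < 0} ↪ Fin q) :=
    Function.Embedding.nonempty_of_card_le (by simpa using hq)
  let g : {i // l i ≠ 0} → Fin p ⊕ Fin q := fun i =>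
    if h : 0 < l i then Sum.inl (gp ⟨i, h⟩)
    else Sum.inr (gn ⟨i, lt_of_le_of_ne (not_lt.mp h) i.2⟩)
  have hg : Function.Injective g := by
    intro i j hij
    by_cases hi : 0 < l i <;> by_cases hj : 0 < l j <;> simp [g, hi, hj] at hij
    · exact Subtype.ext hij
    · exact Subtype.ext hij
  let c : {i // l i ≠ 0} → Fin n → ℂ := fun i => ((Real.sqrt |l i| : ℝ) : ℂ) • u i
  let w : Fin p ⊕ Fin q → Fin n → ℂ := Function.extend g c 0
  have hwg : ∀ i, w (g i) = c i := fun i => hg.extend_apply _ _ _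
  have hw0 : ∀ j, j ∉ Set.range g → w j = 0 := fun j hj => by
    simpa using Function.extend_apply' (f := g) c (0 : Fin p ⊕ Fin q → Fin n → ℂ) j (by simpa using hj)
  refine ⟨w, ?_, ?_, ?_⟩
  · rw [hMu, sgnSum]
    rw [← Fintype.sum_of_injective g hg
      (fun i => l i • outer (u i) (u i))]
    · symm
      apply Fintype.sum_of_injective (Subtype.val) Subtype.val_injective
      · intro i hi
        have : l i = 0 := by simpa using hi
        simp [this]
      · intro i; rfl
    · intro j hj
      rw [hw0 j hj]
      simp [outer]
    · intro i
      rw [hwg i]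
      simp only [c]
      rw [outer_smul, smul_smul, Real.sq_sqrt (abs_nonneg _)]
      congr 1
      by_cases hi : 0 < l i
      · simp [g, hi, abs_of_pos hi]
      · simp [g, hi, abs_of_nonpos (not_lt.mp hi)]
  · intro j k hjk
    by_cases hj : j ∈ Set.range g
    · by_cases hk : k ∈ Set.range g
      · obtain ⟨i, rfl⟩ := hj
        obtain ⟨i', rfl⟩ := hk
        rw [hwg, hwg]
        simp only [c]
        rw [cip_smul_left, cip_smul_right, hou, if_neg]
        · simp
        · intro h
          exact hjk (congrArg g (Subtype.ext h))
      · simp [hw0 k hk, cip]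
    · simp [hw0 j hj, cip]
  · rw [nucNorm, ← hl]
    rw [← Fintype.sum_of_injective g hg (fun i => |l i|)]
    · symm
      apply Fintype.sum_of_injective (Subtype.val) Subtype.val_injective
      · intro i hi
        have : l i = 0 := by simpa using hi
        simp [this]
      · intro i; rfl
    · intro j hj
      rw [hw0 j hj]
      simp [cnSq]
    · intro i
      rw [hwg i]
      have h1 := cip_self (c i)
      simp only [c] at h1
      rw [cip_smul_left, cip_smul_right, hou, if_pos rfl, Complex.conj_ofReal] at h1
      have h2 : Real.sqrt |l i| * (Real.sqrt |l i| * 1) = cnSq (c i) := by exact_mod_cast h1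
      rw [← h2, mul_one, Real.mul_self_sqrt (abs_nonneg _)]

lemma outer_herm {n : ℕ} (x : Fin n → ℂ) : (outer x x).IsHermitian := by
  ext i j
  simp [outer, Matrix.vecMulVec, mul_comm]

lemma sgnSum_herm {n p q : ℕ} (w : Fin p ⊕ Fin q → Fin n → ℂ) : (sgnSum w).IsHermitian := by
  unfold Matrix.IsHermitian sgnSum
  rw [Matrix.conjTranspose_sum]
  refine Finset.sum_congr rfl fun j _ => ?_
  rw [Matrix.conjTranspose_smul, (outer_herm _).eq]
  simp

lemma sgnSum_continuous {n p q : ℕ} :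
    Continuous (fun w : Fin p ⊕ Fin q → Fin n → ℂ => sgnSum w) := by
  unfold sgnSum
  refine continuous_finsetSum _ fun j _ => ?_
  refine continuous_matrix fun i k => ?_
  simp only [outer, Matrix.vecMulVec, Matrix.smul_apply, Matrix.of_apply, Pi.star_apply]
  fun_prop

lemma sgnSum_orth {n p q : ℕ} (w : Fin p ⊕ Fin q → Fin n → ℂ)
    (ho : ∀ j k, j ≠ k → cip (w j) (w k) = 0) (h0 : sgnSum w = 0) (j) : cnSq (w j) = 0 := by
  have h := congrArg (qfL (w j)) h0
  simp only [sgnSum, map_sum, map_smul, qfL_outer, smul_eq_mul, map_zero] at h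
  rw [Finset.sum_eq_single j] at h
  · rw [cip_self] at h
    rcases j with j | j <;> simpa using h
  · intro k _ hk
    simp [ho j k hk.symm]
  · simp

lemma cond3 {n m : ℕ} (f : Fin m → Fin n → ℂ)
    (h : ∀ w : Fin 1 ⊕ Fin 2 → Fin n → ℂ, AcMap f (sgnSum w) = 0 → sgnSum w = 0) :
    ∃ A : ℝ, 0 < A ∧ ∀ w : Fin 1 ⊕ Fin 2 → Fin n → ℂ, (∀ j k, j ≠ k → cip (w j) (w k) = 0) →
      A * (∑ j, cnSq (w j)) ^ 2 ≤ ∑ k, (AcMap f (sgnSum w) k) ^ 2 := by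
  let K : Set (Fin 1 ⊕ Fin 2 → Fin n → ℂ) :=
    {w | (∑ j, cnSq (w j) = 1) ∧ ∀ j k, j ≠ k → cip (w j) (w k) = 0}
  have hK : IsCompact K := by
    apply Metric.isCompact_of_isClosed_isBounded
    · apply IsClosed.inter
      · refine isClosed_eq ?_ continuous_const
        unfold cnSq
        have := Complex.continuous_normSq
        fun_prop
      · change IsClosed {w : Fin 1 ⊕ Fin 2 → Fin n → ℂ | ∀ j k, j ≠ k → cip (w j) (w k) = 0}
        simp only [Set.ofPred_forall]
        refine isClosed_iInter fun j => isClosed_iInter fun k => isClosed_iInter fun _ =>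
          isClosed_eq ?_ continuous_const
        unfold cip
        fun_prop
    · refine (Metric.isBounded_closedBall (x := 0) (r := 1)).subset ?_
      intro w hw
      rw [mem_closedBall_zero_iff, pi_norm_le_iff_of_nonneg zero_le_one]
      intro j
      rw [pi_norm_le_iff_of_nonneg zero_le_one]
      intro i
      have h1 : cnSq (w j) ≤ 1 := by
        rw [← hw.1]
        exact Finset.single_le_sum (f := fun j => cnSq (w j)) (fun j _ => cnSq_nonneg _)
          (Finset.mem_univ j)
      have h2 : Complex.normSq (w j i) ≤ cnSq (w j) :=
        Finset.single_le_sum (f := fun i => Complex.normSq (w j i))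
          (fun j _ => Complex.normSq_nonneg _) (Finset.mem_univ i)
      rw [Complex.normSq_eq_norm_sq] at h2
      nlinarith [norm_nonneg (w j i)]
  have hc : Continuous (fun w : Fin 1 ⊕ Fin 2 → Fin n → ℂ =>
      ∑ k, (AcMap f (sgnSum w) k) ^ 2) := by
    refine continuous_finsetSum _ fun k _ => Continuous.pow ?_ 2
    simp only [AcMap_eq]
    exact (LinearMap.continuous_of_finiteDimensional (qfL (f k))).comp sgnSum_continuous
  obtain ⟨A, hA, hAK⟩ := hK.exists_forall_le' hc.continuousOn (a := 0) (by
    intro w hw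
    refine lt_of_le_of_ne (Finset.sum_nonneg fun k _ => sq_nonneg _) fun h0 => ?_
    have h1 := (Finset.sum_eq_zero_iff_of_nonneg (fun k _ => sq_nonneg _)).mp h0.symm
    have h2 : AcMap f (sgnSum w) = 0 := by
      funext k
      simpa using h1 k (Finset.mem_univ k)
    have h3 := sgnSum_orth w hw.2 (h w h2)
    have := hw.1
    simp [h3] at this)
  refine ⟨A, hA, fun w hw => ?_⟩
  set t := ∑ j, cnSq (w j) with ht
  have ht0 : 0 ≤ t := Finset.sum_nonneg fun j _ => cnSq_nonneg _
  rcases ht0.eq_or_lt with h0 | hpos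
  · rw [← h0]
    simpa using Finset.sum_nonneg fun k _ => sq_nonneg _
  · let s : ℝ := (Real.sqrt t)⁻¹
    have hs : s ^ 2 = t⁻¹ := by simp [s, Real.sq_sqrt ht0]
    let w' : Fin 1 ⊕ Fin 2 → Fin n → ℂ := fun j => (s : ℂ) • w j
    have hsum : sgnSum w' = t⁻¹ • sgnSum w := by
      simp only [sgnSum, w', outer_smul, hs, Finset.smul_sum]
      exact Finset.sum_congr rfl fun j _ => smul_comm _ _ _
    have hcn : ∀ j, cnSq (w' j) = t⁻¹ * cnSq (w j) := by
      intro j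
      simp only [cnSq, w', Pi.smul_apply, smul_eq_mul, map_mul, Complex.normSq_ofReal,
        ← Finset.mul_sum]
      rw [← pow_two, hs]
    have := hAK w' ⟨by
      simp only [hcn, ← Finset.mul_sum]
      exact inv_mul_cancel₀ hpos.ne', by
      intro j k hjk
      simp only [w']
      rw [cip_smul_left, cip_smul_right, hw j k hjk]
      simp⟩
    simp only [hsum, AcMap_eq, map_smul, smul_eq_mul, mul_pow, ← Finset.mul_sum] at this
    simp only [AcMap_eq]
    calc A * t ^ 2 ≤ ((t⁻¹) ^ 2 * ∑ k, (qfL (f k) (sgnSum w)) ^ 2) * t ^ 2 := by gcongr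
      _ = _ := by field_simp

/-- The following are equivalent: (i) for every `x`, the only `X ∈ S^{1,1}`
with `A(X) = A(xx*)` is `X = xx*`; (ii) the only `Z ∈ S^{2,1}` with `A(Z) = 0` is `Z = 0`;
(iii) there is `A₃ > 0` with `A₃‖X − Y‖₁² ≤ ‖A(X) − A(Y)‖²` for all `X ∈ S^{1,1}`,
`Y ∈ S^{1,0}`. -/
theorem stmt18 (n m : ℕ) (f : Fin m → Fin n → ℂ)
    (hspan : Submodule.span ℂ (Set.range f) = ⊤) :
    List.TFAE
      [ ∀ (x : Fin n → ℂ) (X : Matrix (Fin n) (Fin n) ℂ) (hX : X.IsHermitian),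
          posCount hX ≤ 1 → negCount hX ≤ 1 →
          AcMap f X = AcMap f (outer x x) → X = outer x x,
        ∀ (Z : Matrix (Fin n) (Fin n) ℂ) (hZ : Z.IsHermitian),
          posCount hZ ≤ 2 → negCount hZ ≤ 1 → AcMap f Z = 0 → Z = 0,
        ∃ A₃ : ℝ, 0 < A₃ ∧
          ∀ (X Y : Matrix (Fin n) (Fin n) ℂ) (hX : X.IsHermitian) (hY : Y.IsHermitian)
            (hXY : (X - Y).IsHermitian),
            posCount hX ≤ 1 → negCount hX ≤ 1 → posCount hY ≤ 1 → negCount hY ≤ 0 →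
            A₃ * nucNorm hXY ^ 2 ≤ ∑ k, (AcMap f X k - AcMap f Y k) ^ 2 ] := by
  tfae_have 1 → 2 := by
    intro h Z hZ hp hq hA
    obtain ⟨w, hw, -, -⟩ := decomp hZ hp hq
    let x := w (Sum.inl 0)
    let w' : Fin 1 ⊕ Fin 1 → Fin n → ℂ := Sum.elim (fun _ => w (Sum.inr 0)) (fun _ => w (Sum.inl 1))
    have hX : outer x x - Z = sgnSum w' := by
      rw [hw]
      simp [sgnSum, w', x, Fin.sum_univ_two]
      abel
    have hH : (outer x x - Z).IsHermitian := (outer_herm x).sub hZ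
    obtain ⟨h1, h2⟩ := inertia hH w' hX
    have := h x _ hH h1 h2 (by rw [AcMap_sub, hA, sub_zero])
    simpa using this
  tfae_have 2 → 3 := by
    intro h
    obtain ⟨A, hA, hAw⟩ := cond3 f (by
      intro w hw
      let w' : Fin 2 ⊕ Fin 1 → Fin n → ℂ := fun j => w j.swap
      have hX : -sgnSum w = sgnSum w' := by
        simp [sgnSum, w', Fin.sum_univ_two]
      have hH : (-sgnSum w).IsHermitian := (sgnSum_herm w).neg
      obtain ⟨h1, h2⟩ := inertia hH w' hX
      have := h _ hH h1 h2 (by rw [AcMap_neg, hw, neg_zero])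
      simpa using this)
    refine ⟨A, hA, fun X Y hX hY hXY h1 h2 h3 h4 => ?_⟩
    obtain ⟨a, ha, -, -⟩ := decomp hX h1 h2
    obtain ⟨b, hb, -, -⟩ := decomp hY h3 h4
    let w' : Fin 1 ⊕ Fin 2 → Fin n → ℂ :=
      Sum.elim (fun _ => a (Sum.inl 0)) ![a (Sum.inr 0), b (Sum.inl 0)]
    have hZ : X - Y = sgnSum w' := by
      rw [ha, hb]
      simp [sgnSum, w', Fin.sum_univ_two]
      abel
    obtain ⟨h5, h6⟩ := inertia hXY w' hZ
    obtain ⟨w, hw, ho, hn⟩ := decomp hXY h5 h6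
    have := hAw w ho
    rw [← hw, ← hn, AcMap_sub] at this
    simpa using this
  tfae_have 3 → 1 := by
    rintro ⟨A, hA, h⟩ x X hX hp hq hAX
    have hxx := outer_herm x
    have hx : outer x x = sgnSum (p := 1) (q := 0) (Sum.elim (fun _ => x) (fun _ => 0)) := by
      simp [sgnSum]
    obtain ⟨h1, h2⟩ := inertia hxx _ hx
    have hXY := hX.sub hxx
    have h3 := h X (outer x x) hX hxx hXY hp hq h1 h2
    rw [hAX] at h3
    simp only [sub_self] at h3
    have h4 : nucNorm hXY = 0 := by
      have : nucNorm hXY ^ 2 ≤ 0 := by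
        by_contra hc
        push Not at hc
        have := mul_pos hA hc
        simp at h3
        linarith
      exact pow_eq_zero_iff (two_ne_zero) |>.mp (le_antisymm this (sq_nonneg _))
    rw [nucNorm, Finset.sum_eq_zero_iff_of_nonneg (fun i _ => abs_nonneg _)] at h4
    have h5 : hXY.eigenvalues = 0 := by
      funext i
      simpa using h4 i (Finset.mem_univ i)
    exact sub_eq_zero.mp (hXY.eigenvalues_eq_zero_iff.mp h5)
  tfae_finish
end
end
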